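/- Let X be a Gaussian random variable with distribution N(0, σ²) where σ > 0. Then for every real number x ≥ 0, Pr[X ≥ x] ≥ exp(−x²/(2σ²)) · 1/(√(2π)·(x/σ) + 2). -/

import Mathlib

open MeasureTheory ProbabilityTheory Real

open Set Filter Topology
open scoped NNReal

/-! Let `φ` be the density and `Q x = ∫_x^∞ φ` the upper tail of `N(m, v)`. The hazard rate
`h = φ / Q` satisfies `h' = h (h - (x - m) / v)`, and Cauchy–Schwarz for the first two moments of
`N(m, v)` restricted to `[x, ∞)` says exactly that `h' ≤ 1 / v`. By symmetry `h m = 2 φ m`, so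
`h x ≤ 2 φ m + (x - m) / v` for `x ≥ m`, which is the claimed lower bound on `Q x = φ x / h x`. -/

section CauchySchwarz

variable {α : Type*} [MeasurableSpace α] {μ : Measure α} [IsFiniteMeasure μ] {f : α → ℝ}

lemma sq_integral_le_measureReal_univ_mul_integral_sq (hf : MemLp f 2 μ) :
    (∫ a, f a ∂μ) ^ 2 ≤ μ.real univ * ∫ a, f a ^ 2 ∂μ := by
  have hf_int : Integrable f μ := hf.integrable one_le_two
  have quadratic_nonneg (c : ℝ) :
      0 ≤ μ.real univ * (c * c) + (-2 * ∫ a, f a ∂μ) * c + ∫ a, f a ^ 2 ∂μ :=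
    calc 0 ≤ ∫ a, (c ^ 2 - 2 * c * f a + f a ^ 2) ∂μ :=
          integral_nonneg fun a ↦ (sq_nonneg (c - f a)).trans_eq (by ring)
      _ = μ.real univ * (c * c) + (-2 * ∫ a, f a ∂μ) * c + ∫ a, f a ^ 2 ∂μ := by
          rw [integral_add (by fun_prop) hf.integrable_sq, integral_sub (by fun_prop) (by fun_prop),
            integral_const_mul, integral_const, smul_eq_mul]
          ring
  have := discrim_le_zero quadratic_nonneg
  rw [discrim] at this
  linarith

end CauchySchwarz

section Density

variable {m : ℝ} {v : ℝ≥0} {A : Set ℝ} {f : ℝ → ℝ}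

lemma gaussianPDFReal_mean (m : ℝ) (v : ℝ≥0) : gaussianPDFReal m v m = (√(2 * π * v))⁻¹ := by
  simp [gaussianPDFReal]

lemma hasDerivAt_gaussianPDFReal (m : ℝ) (v : ℝ≥0) (x : ℝ) :
    HasDerivAt (gaussianPDFReal m v) (-((x - m) / v) * gaussianPDFReal m v x) x := by
  have h_exponent : HasDerivAt (fun s : ℝ ↦ -(s - m) ^ 2 / (2 * v)) (-((x - m) / v)) x := by
    refine ((((hasDerivAt_id x).sub_const m).pow 2).neg.div_const (2 * (v : ℝ))).congr_deriv ?_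
    simp only [Nat.cast_ofNat, id_eq, Nat.add_one_sub_one, pow_one, mul_one]
    ring
  exact (h_exponent.exp.const_mul (√(2 * π * v))⁻¹).congr_deriv (by rw [gaussianPDFReal]; ring)

lemma continuous_gaussianPDFReal (m : ℝ) (v : ℝ≥0) : Continuous (gaussianPDFReal m v) :=
  continuous_iff_continuousAt.2 fun x ↦ (hasDerivAt_gaussianPDFReal m v x).continuousAt

lemma gaussianPDFReal_div_two_mul_mean_add (hv : v ≠ 0) (x : ℝ) :
    gaussianPDFReal m v x / (2 * gaussianPDFReal m v m + (x - m) / v) =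
      rexp (-(x - m) ^ 2 / (2 * v)) * (1 / (√(2 * π) * ((x - m) / √v) + 2)) := by
  have h_sqrt_ne : √(2 * π * v) ≠ 0 := by positivity
  have h_sqrt_div : √(2 * π * v) / v = √(2 * π) / √v := by
    rw [Real.sqrt_mul (by positivity), mul_div_assoc, Real.sqrt_div_self, div_eq_mul_inv]
  have h_denom : √(2 * π * v) * (2 * gaussianPDFReal m v m + (x - m) / v) =
      √(2 * π) * ((x - m) / √v) + 2 :=
    calc √(2 * π * v) * (2 * gaussianPDFReal m v m + (x - m) / v)
        = 2 * (√(2 * π * v) * gaussianPDFReal m v m) + √(2 * π * v) / v * (x - m) := by ring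
      _ = √(2 * π) * ((x - m) / √v) + 2 := by
        rw [gaussianPDFReal_mean, mul_inv_cancel₀ h_sqrt_ne, h_sqrt_div]
        ring
  rw [← mul_div_mul_left _ _ h_sqrt_ne, h_denom, gaussianPDFReal, mul_inv_cancel_left₀ h_sqrt_ne,
    mul_one_div]

lemma integrableOn_gaussianReal_iff (hv : v ≠ 0) (hA : MeasurableSet A) :
    IntegrableOn f A (gaussianReal m v) ↔ IntegrableOn (fun s ↦ gaussianPDFReal m v s * f s) A := by
  rw [IntegrableOn, gaussianReal_of_var_ne_zero m hv, restrict_withDensity hA,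
    integrable_withDensity_iff_integrable_smul' (measurable_gaussianPDF m v)
      (ae_of_all _ fun _ ↦ gaussianPDF_lt_top)]
  simp only [toReal_gaussianPDF, smul_eq_mul, IntegrableOn]

lemma setIntegral_gaussianReal_eq_setIntegral_mul (hv : v ≠ 0) (hA : MeasurableSet A) :
    ∫ s in A, f s ∂gaussianReal m v = ∫ s in A, gaussianPDFReal m v s * f s := by
  rw [gaussianReal_of_var_ne_zero m hv,
    setIntegral_withDensity_eq_setIntegral_toReal_smul (measurable_gaussianPDF m v)
      (ae_of_all _ fun _ ↦ gaussianPDF_lt_top) _ hA]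
  simp only [toReal_gaussianPDF, smul_eq_mul]

lemma gaussianReal_real_eq_integral (m : ℝ) (hv : v ≠ 0) (A : Set ℝ) :
    (gaussianReal m v).real A = ∫ s in A, gaussianPDFReal m v s := by
  rw [measureReal_def, gaussianReal_apply_eq_integral m hv,
    ENNReal.toReal_ofReal (integral_nonneg fun _ ↦ gaussianPDFReal_nonneg m v _)]

end Density

section Tail

variable {m : ℝ} {v : ℝ≥0}

lemma gaussianReal_real_Ici_pos (m : ℝ) (hv : v ≠ 0) (x : ℝ) :
    0 < (gaussianReal m v).real (Ici x) := by
  refine ENNReal.toReal_pos (fun h_null ↦ ?_) (measure_ne_top _ _)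
  simpa using gaussianReal_absolutelyContinuous' m hv h_null

lemma gaussianReal_real_Ici_mean (m : ℝ) (hv : v ≠ 0) :
    (gaussianReal m v).real (Ici m) = 1 / 2 := by
  have := nullSingletonClass_gaussianReal (μ := m) hv
  have h_reflect : (gaussianReal m v).map (2 * m - ·) = gaussianReal m v := by
    rw [gaussianReal_map_const_sub]
    congr 1
    ring
  have h_symm : (gaussianReal m v).real (Ici m) = (gaussianReal m v).real (Iio m) :=
    calc (gaussianReal m v).real (Ici m)
        = (gaussianReal m v).real ((2 * m - ·) ⁻¹' Ici m) := by
          rw [← map_measureReal_apply (by fun_prop) measurableSet_Ici, h_reflect]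
      _ = (gaussianReal m v).real (Iic m) := by
          congr 1
          ext s
          simp only [mem_preimage, mem_Ici, mem_Iic]
          constructor <;> intro <;> linarith
      _ = (gaussianReal m v).real (Iio m) := measureReal_congr Iio_ae_eq_Iic.symm
  have h_total := probReal_add_probReal_compl (μ := gaussianReal m v) (measurableSet_Ici (a := m))
  rw [compl_Ici, ← h_symm] at h_total
  linarith

lemma hasDerivAt_gaussianReal_real_Ici (m : ℝ) (hv : v ≠ 0) (x : ℝ) :
    HasDerivAt (fun x ↦ (gaussianReal m v).real (Ici x)) (-gaussianPDFReal m v x) x := by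
  have h_tail (y : ℝ) : (gaussianReal m v).real (Ici y) =
      (∫ s in Ioi m, gaussianPDFReal m v s) - ∫ s in m..y, gaussianPDFReal m v s := by
    have h_int := integrable_gaussianPDFReal m v
    rw [gaussianReal_real_eq_integral m hv, integral_Ici_eq_integral_Ioi, eq_sub_iff_add_eq',
      intervalIntegral.integral_interval_add_Ioi h_int.integrableOn h_int.integrableOn]
  simp only [h_tail]
  exact ((continuous_gaussianPDFReal m v).integral_hasStrictDerivAt m x).hasDerivAt.const_sub _

/-- Stein's identity on a half-line. -/
lemma setIntegral_Ici_sub_mean_mul_gaussianReal (hv : v ≠ 0) {f f' : ℝ → ℝ} {x : ℝ}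
    (hf : ∀ s ∈ Ici x, HasDerivAt f (f' s) s)
    (hf_int : IntegrableOn f (Ici x) (gaussianReal m v))
    (hf'_int : IntegrableOn f' (Ici x) (gaussianReal m v))
    (hmul_int : IntegrableOn (fun s ↦ (s - m) * f s) (Ici x) (gaussianReal m v)) :
    ∫ s in Ici x, (s - m) * f s ∂gaussianReal m v =
      v * (gaussianPDFReal m v x * f x + ∫ s in Ici x, f' s ∂gaussianReal m v) := by
  have hv' : (v : ℝ) ≠ 0 := NNReal.coe_ne_zero.2 hv
  have h_int : IntegrableOn (fun s ↦ f' s - (s - m) * f s / v) (Ici x) (gaussianReal m v) :=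
    hf'_int.sub (hmul_int.div_const _)
  have h_deriv (s : ℝ) (hs : s ∈ Ici x) : HasDerivAt (fun s ↦ gaussianPDFReal m v s * f s)
      (gaussianPDFReal m v s * (f' s - (s - m) * f s / v)) s :=
    ((hasDerivAt_gaussianPDFReal m v s).mul (hf s hs)).congr_deriv (by ring)
  have h_deriv_int := ((integrableOn_gaussianReal_iff hv measurableSet_Ici).1 h_int).mono_set
    Ioi_subset_Ici_self
  have h_lim : Tendsto (fun s ↦ gaussianPDFReal m v s * f s) atTop (𝓝 0) :=
    tendsto_zero_of_hasDerivAt_of_integrableOn_Ioi (fun s hs ↦ h_deriv s (Ioi_subset_Ici_self hs))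
      h_deriv_int
      (((integrableOn_gaussianReal_iff hv measurableSet_Ici).1 hf_int).mono_set Ioi_subset_Ici_self)
  have h_parts : ∫ s in Ici x, (f' s - (s - m) * f s / v) ∂gaussianReal m v =
      -(gaussianPDFReal m v x * f x) := by
    rw [setIntegral_gaussianReal_eq_setIntegral_mul hv measurableSet_Ici,
      integral_Ici_eq_integral_Ioi,
      integral_Ioi_of_hasDerivAt_of_tendsto' h_deriv h_deriv_int h_lim, zero_sub]
  rw [integral_sub hf'_int (hmul_int.div_const _), integral_div] at h_parts
  field_simp at h_parts
  linarith

lemma memLp_sub_mean_gaussianReal (m : ℝ) (v : ℝ≥0) (p : ℝ≥0) :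
    MemLp (fun s ↦ s - m) p (gaussianReal m v) :=
  (memLp_id_gaussianReal p).sub (memLp_const m)

lemma setIntegral_Ici_sub_mean_gaussianReal (hv : v ≠ 0) (x : ℝ) :
    ∫ s in Ici x, (s - m) ∂gaussianReal m v = v * gaussianPDFReal m v x := by
  have h_int : Integrable (fun s ↦ s - m) (gaussianReal m v) :=
    (memLp_sub_mean_gaussianReal m v 1).integrable le_rfl
  simpa using setIntegral_Ici_sub_mean_mul_gaussianReal hv (x := x)
    (fun s _ ↦ hasDerivAt_const s (1 : ℝ)) integrableOn_const integrableOn_const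
    (by simpa using h_int.integrableOn)

lemma setIntegral_Ici_sub_mean_sq_gaussianReal (hv : v ≠ 0) (x : ℝ) :
    ∫ s in Ici x, (s - m) ^ 2 ∂gaussianReal m v =
      v * (gaussianPDFReal m v x * (x - m) + (gaussianReal m v).real (Ici x)) := by
  have h_memLp : MemLp (fun s ↦ s - m) 2 (gaussianReal m v) := memLp_sub_mean_gaussianReal m v 2
  simpa [sq] using setIntegral_Ici_sub_mean_mul_gaussianReal hv (x := x)
    (fun s _ ↦ (hasDerivAt_id s).sub_const m) (h_memLp.integrable one_le_two).integrableOn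
    integrableOn_const (by simpa [sq] using h_memLp.integrable_sq.integrableOn)

lemma mul_sq_gaussianPDFReal_le (hv : v ≠ 0) (x : ℝ) :
    v * gaussianPDFReal m v x ^ 2 ≤ (gaussianReal m v).real (Ici x) *
      (gaussianPDFReal m v x * (x - m) + (gaussianReal m v).real (Ici x)) := by
  have hv' : (0 : ℝ) < v := NNReal.coe_pos.2 (pos_iff_ne_zero.2 hv)
  have h_cs := sq_integral_le_measureReal_univ_mul_integral_sq
    ((memLp_sub_mean_gaussianReal m v 2).restrict (Ici x))
  rw [measureReal_restrict_apply_univ, setIntegral_Ici_sub_mean_gaussianReal hv,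
    setIntegral_Ici_sub_mean_sq_gaussianReal hv] at h_cs
  refine le_of_mul_le_mul_left ?_ hv'
  linarith

end Tail

section Hazard

/-- The hazard rate `φ / Q` of `N(m, v)`, the reciprocal of its Mills ratio, where `φ` is the
density and `Q` the upper tail. Bounding `Q` from below amounts to bounding it from above. -/
noncomputable def gaussianHazard (m : ℝ) (v : ℝ≥0) (x : ℝ) : ℝ :=
  gaussianPDFReal m v x / (gaussianReal m v).real (Ici x)

variable {m : ℝ} {v : ℝ≥0} {x : ℝ}

lemma gaussianHazard_mean (m : ℝ) (hv : v ≠ 0) :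
    gaussianHazard m v m = 2 * gaussianPDFReal m v m := by
  rw [gaussianHazard, gaussianReal_real_Ici_mean m hv]
  ring

lemma hasDerivAt_gaussianHazard (m : ℝ) (hv : v ≠ 0) (x : ℝ) :
    HasDerivAt (gaussianHazard m v)
      (gaussianHazard m v x * (gaussianHazard m v x - (x - m) / v)) x := by
  have hQ := (gaussianReal_real_Ici_pos m hv x).ne'
  refine ((hasDerivAt_gaussianPDFReal m v x).div
    (hasDerivAt_gaussianReal_real_Ici m hv x) hQ).congr_deriv ?_
  rw [gaussianHazard]
  field_simp
  ring

lemma gaussianHazard_mul_sub_le (m : ℝ) (hv : v ≠ 0) (x : ℝ) :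
    gaussianHazard m v x * (gaussianHazard m v x - (x - m) / v) ≤ 1 / v := by
  have hv' : (0 : ℝ) < v := NNReal.coe_pos.2 (pos_iff_ne_zero.2 hv)
  have hQ := gaussianReal_real_Ici_pos m hv x
  have h_moments := mul_sq_gaussianPDFReal_le (m := m) hv x
  rw [gaussianHazard]
  field_simp
  linarith

lemma antitone_gaussianHazard_sub_div (m : ℝ) (hv : v ≠ 0) :
    Antitone fun x ↦ gaussianHazard m v x - x / v := by
  have h_deriv (x : ℝ) : HasDerivAt (fun x ↦ gaussianHazard m v x - x / v)
      (gaussianHazard m v x * (gaussianHazard m v x - (x - m) / v) - 1 / v) x :=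
    (hasDerivAt_gaussianHazard m hv x).sub ((hasDerivAt_id x).div_const (v : ℝ))
  refine antitone_of_deriv_nonpos (fun x ↦ (h_deriv x).differentiableAt) fun x ↦ ?_
  rw [(h_deriv x).deriv]
  exact sub_nonpos.2 (gaussianHazard_mul_sub_le m hv x)

lemma gaussianHazard_le (hv : v ≠ 0) (hx : m ≤ x) :
    gaussianHazard m v x ≤ 2 * gaussianPDFReal m v m + (x - m) / v := by
  have := antitone_gaussianHazard_sub_div m hv hx
  simp only [gaussianHazard_mean m hv] at this
  rw [sub_div]
  linarith

end Hazard

theorem gaussian_tail_lower_bound_general {m : ℝ} {v : ℝ≥0} (hv : v ≠ 0) {x : ℝ} (hx : m ≤ x) :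
    rexp (-(x - m) ^ 2 / (2 * v)) * (1 / (√(2 * π) * ((x - m) / √v) + 2)) ≤
      (gaussianReal m v).real (Ici x) := by
  have h_denom : 0 < 2 * gaussianPDFReal m v m + (x - m) / v := by
    have := gaussianPDFReal_pos m v m hv
    have := sub_nonneg.2 hx
    positivity
  rw [← gaussianPDFReal_div_two_mul_mean_add hv,
    div_le_comm₀ h_denom (gaussianReal_real_Ici_pos m hv x)]
  exact gaussianHazard_le hv hx

/-- Lower bound on the Gaussian tail: if `X ~ N(0, σ²)` with `σ > 0`, then for
every `x ≥ 0`, `Pr[X ≥ x] ≥ exp(−x²/(2σ²)) · 1/(√(2π)·(x/σ) + 2)`. -/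
theorem gaussian_tail_lower_bound {Ω : Type*} [MeasurableSpace Ω]
    (μ : Measure Ω) [IsProbabilityMeasure μ]
    (σ : ℝ) (hσ : 0 < σ) (X : Ω → ℝ) (hX : Measurable X)
    (hlaw : μ.map X = gaussianReal 0 ⟨σ ^ 2, sq_nonneg σ⟩)
    (x : ℝ) (hx : 0 ≤ x) :
    (μ {ω | x ≤ X ω}).toReal ≥
      Real.exp (-x ^ 2 / (2 * σ ^ 2)) * (1 / (Real.sqrt (2 * π) * (x / σ) + 2)) := by
  have h_var : NNReal.mk (σ ^ 2) (sq_nonneg σ) ≠ 0 := NNReal.coe_ne_zero.1 (pow_ne_zero 2 hσ.ne')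
  have h_law : μ.map X = gaussianReal 0 (.mk (σ ^ 2) (sq_nonneg σ)) := hlaw
  have h_tail := gaussian_tail_lower_bound_general h_var hx
  rw [← h_law, map_measureReal_apply hX measurableSet_Ici] at h_tail
  rw [NNReal.coe_mk, Real.sqrt_sq hσ.le, sub_zero] at h_tail
  exact h_tail
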